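/- Let χ be an uncountable regular cardinal. Then for any cardinal λ ≥ χ and any cardinal σ with 2 ≤ σ < χ, cov(λ, χ, χ, σ) = max{χ, cov(λ, χ⁺, χ, σ)}. -/

import Mathlib

open Cardinal Set

universe u

/-- `X ⊆ 𝒫_{ρ₂}(ρ₁)` is a family witnessing the covering number `cov (ρ₁, ρ₂, ρ₃, ρ₄)`:
every `b ∈ 𝒫_{ρ₃}(ρ₁)` is covered by the union of fewer than `ρ₄` members of `X`. -/
def IsCovFamily (ρ₁ ρ₂ ρ₃ ρ₄ : Cardinal.{u}) (X : Set (Set ρ₁.out)) : Prop :=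
  (∀ x ∈ X, #x < ρ₂) ∧
    ∀ b : Set ρ₁.out, #b < ρ₃ →
      ∃ Q : Set (Set ρ₁.out), Q ⊆ X ∧ #Q < ρ₄ ∧ b ⊆ ⋃₀ Q

open scoped Classical in
/-- The covering number `cov (ρ₁, ρ₂, ρ₃, ρ₄)`: the least cardinality of a set
`X ⊆ 𝒫_{ρ₂}(ρ₁)` such that every `b ∈ 𝒫_{ρ₃}(ρ₁)` is included in the union of
fewer than `ρ₄` members of `X` (with value `2 ^ ρ₁` if no such family exists). -/
noncomputable def cov (ρ₁ ρ₂ ρ₃ ρ₄ : Cardinal.{u}) : Cardinal.{u} :=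
  if ∃ X, IsCovFamily ρ₁ ρ₂ ρ₃ ρ₄ X then
    sInf {κ | ∃ X, IsCovFamily ρ₁ ρ₂ ρ₃ ρ₄ X ∧ #X = κ}
  else 2 ^ ρ₁

/-- `χ` is a `λ`-revision cardinal: `cov (λ, χ, χ, σ) ≤ λ` for some cardinal `σ < χ`. -/
def IsRevision (χ lam : Cardinal.{u}) : Prop :=
  ∃ σ < χ, cov lam χ χ σ ≤ lam

/-- `c` is a limit cardinal: infinite and not the successor of any cardinal. -/
def IsLimitCard (c : Cardinal.{u}) : Prop :=
  ℵ₀ ≤ c ∧ ∀ μ : Cardinal.{u}, c ≠ Order.succ μ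

/-- `Z ⊆ 𝒫_τ(λ)` is a family witnessing `equal (λ, τ, ρ, σ)`: every `b ∈ [λ]^ρ` is
the union of fewer than `σ` members of `Z`. -/
def IsEqualFamily (lam tau rho sigma : Cardinal.{u}) (Z : Set (Set lam.out)) : Prop :=
  (∀ z ∈ Z, #z < tau) ∧
    ∀ b : Set lam.out, #b = rho →
      ∃ e : Set (Set lam.out), e ⊆ Z ∧ #e < sigma ∧ b = ⋃₀ e

open scoped Classical in
/-- `equal (λ, τ, ρ, σ)`: the least cardinality of a set `Z ⊆ 𝒫_τ(λ)` such that every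
`b ∈ [λ]^ρ` is the union of fewer than `σ` members of `Z`; `2 ^ λ` if no such `Z` exists. -/
noncomputable def equalCov (lam tau rho sigma : Cardinal.{u}) : Cardinal.{u} :=
  if ∃ Z, IsEqualFamily lam tau rho sigma Z then
    sInf {κ | ∃ Z, IsEqualFamily lam tau rho sigma Z ∧ #Z = κ}
  else 2 ^ lam

/-- `Z ⊆ 𝒫_τ(λ)` is a family witnessing `equal (λ, τ, <ρ, σ)`: every `b ∈ 𝒫_ρ(λ)` is
the union of fewer than `σ` members of `Z`. -/
def IsEqualLtFamily (lam tau rho sigma : Cardinal.{u}) (Z : Set (Set lam.out)) : Prop :=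
  (∀ z ∈ Z, #z < tau) ∧
    ∀ b : Set lam.out, #b < rho →
      ∃ e : Set (Set lam.out), e ⊆ Z ∧ #e < sigma ∧ b = ⋃₀ e

open scoped Classical in
/-- `equal (λ, τ, <ρ, σ)`: the least cardinality of a set `Z ⊆ 𝒫_τ(λ)` such that every
`b ∈ 𝒫_ρ(λ)` is the union of fewer than `σ` members of `Z`; `2 ^ λ` if no such `Z` exists. -/
noncomputable def equalLtCov (lam tau rho sigma : Cardinal.{u}) : Cardinal.{u} :=
  if ∃ Z, IsEqualLtFamily lam tau rho sigma Z then
    sInf {κ | ∃ Z, IsEqualLtFamily lam tau rho sigma Z ∧ #Z = κ}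
  else 2 ^ lam

/-!
The third argument `χ` may be any `τ` with `2 ≤ τ ≤ χ`. A family witnessing `cov (λ, χ, τ, σ)` also
witnesses `cov (λ, χ⁺, τ, σ)`. It moreover covers every point of `λ ≥ χ`, so by regularity of `χ` it
cannot consist of fewer than `χ` sets of size `< χ`.

Conversely, a set `x` of size `≤ χ` is exhausted by the preimages of the initial segments of `χ`
under an injection `x → χ`, and every subset of `x` of size `< cof χ` lies inside one of these `χ`
pieces. In a cover of `b` with `|b| < cof χ`, each member `x` may therefore be replaced by a single
piece, one that contains `b ∩ x`. Hence breaking up all members of a family witnessing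
`cov (λ, χ⁺, τ, σ)`, `τ ≤ cof χ`, multiplies its size by at most `χ` and yields a family witnessing
`cov (λ, χ, τ, σ)`.
-/

section Cofinality

theorem exists_subset_Iio_of_mk_lt_cof {α : Type u} [LinearOrder α] {s : Set α}
    (hs : #s < Order.cof α) : ∃ a, s ⊆ Iio a :=
  not_isCofinal_iff.1 fun h => (Order.cof_le h).not_gt hs

theorem exists_absorbing_family_of_mk_le {α : Type u} {κ : Cardinal.{u}} {x : Set α} (hx : #x ≤ κ) :
    ∃ P : Set (Set α), #P ≤ κ ∧ (∀ p ∈ P, #p < κ) ∧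
      ∀ b ⊆ x, #b < κ.ord.cof → ∃ p ∈ P, b ⊆ p := by
  obtain ⟨f⟩ : #x ≤ #κ.ord.ToType := by rwa [mk_ord_toType]
  let piece (a : κ.ord.ToType) : Set α := (↑) '' (f ⁻¹' Iio a)
  refine ⟨range piece, mk_range_le.trans_eq (mk_ord_toType κ), ?_, fun b hbx hb => ?_⟩
  · rintro _ ⟨a, rfl⟩
    calc #(piece a) ≤ #(f ⁻¹' Iio a) := mk_image_le
      _ ≤ #(Iio a) := mk_preimage_of_injective _ _ f.injective
      _ < #κ.ord.ToType := mk_Iio_lt a (by simp)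
      _ = κ := mk_ord_toType κ
  · have himage : #(range fun y : b => f ⟨y, hbx y.2⟩) < Order.cof κ.ord.ToType := by
      rw [Ordinal.cof_toType]
      exact mk_range_le.trans_lt hb
    obtain ⟨a, ha⟩ := exists_subset_Iio_of_mk_lt_cof himage
    exact ⟨piece a, mem_range_self a, fun y hy => ⟨⟨y, hbx hy⟩, ha ⟨⟨y, hy⟩, rfl⟩, rfl⟩⟩

end Cofinality

section CoveringNumber

variable {ρ₁ ρ₂ ρ₃ ρ₄ κ : Cardinal.{u}} {X : Set (Set ρ₁.out)}

theorem exists_isCovFamily (h₃ : ρ₃ ≤ ρ₂) (h₄ : 2 ≤ ρ₄) :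
    ∃ X, IsCovFamily ρ₁ ρ₂ ρ₃ ρ₄ X := by
  refine ⟨{x | #x < ρ₂}, fun x hx => hx, fun b hb => ⟨{b}, ?_, ?_, ?_⟩⟩
  · exact singleton_subset_iff.2 (hb.trans_le h₃)
  · rw [mk_singleton]
    exact Cardinal.one_lt_two.trans_le h₄
  · rw [sUnion_singleton]

theorem cov_le_mk (hX : IsCovFamily ρ₁ ρ₂ ρ₃ ρ₄ X) : cov ρ₁ ρ₂ ρ₃ ρ₄ ≤ #X := by
  rw [cov, if_pos ⟨X, hX⟩]
  exact csInf_le' ⟨X, hX, rfl⟩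

theorem exists_isCovFamily_mk_eq_cov (h : ∃ X, IsCovFamily ρ₁ ρ₂ ρ₃ ρ₄ X) :
    ∃ X, IsCovFamily ρ₁ ρ₂ ρ₃ ρ₄ X ∧ #X = cov ρ₁ ρ₂ ρ₃ ρ₄ := by
  rw [cov, if_pos h]
  obtain ⟨X, hX⟩ := h
  exact csInf_mem (s := {κ | ∃ X, IsCovFamily ρ₁ ρ₂ ρ₃ ρ₄ X ∧ #X = κ}) ⟨#X, X, hX, rfl⟩

theorem IsCovFamily.mono_size (h : ρ₂ ≤ κ) (hX : IsCovFamily ρ₁ ρ₂ ρ₃ ρ₄ X) :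
    IsCovFamily ρ₁ κ ρ₃ ρ₄ X :=
  ⟨fun x hx => (hX.1 x hx).trans_le h, hX.2⟩

theorem IsCovFamily.sUnion_eq_univ (hX : IsCovFamily ρ₁ ρ₂ ρ₃ ρ₄ X) (h₃ : 2 ≤ ρ₃) :
    ⋃₀ X = Set.univ := by
  refine eq_univ_of_forall fun y => ?_
  have hy : #({y} : Set ρ₁.out) < ρ₃ := by
    rw [mk_singleton]
    exact Cardinal.one_lt_two.trans_le h₃
  obtain ⟨Q, hQX, -, hyQ⟩ := hX.2 {y} hy
  exact sUnion_subset_sUnion hQX (hyQ rfl)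

theorem IsCovFamily.le_mk (hX : IsCovFamily ρ₁ ρ₂ ρ₃ ρ₄ X) (hreg : ρ₂.IsRegular)
    (h₁ : ρ₂ ≤ ρ₁) (h₃ : 2 ≤ ρ₃) : ρ₂ ≤ #X := by
  by_contra! hlt
  have hsmall : #(⋃₀ X) < ρ₂ := by
    rw [sUnion_eq_biUnion]
    exact (card_biUnion_lt_iff_forall_of_isRegular hreg hlt).2 hX.1
  rw [hX.sUnion_eq_univ h₃, mk_univ, mk_out] at hsmall
  exact hsmall.not_ge h₁

theorem IsCovFamily.biUnion (hX : IsCovFamily ρ₁ ρ₂ ρ₃ ρ₄ X)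
    {P : Set ρ₁.out → Set (Set ρ₁.out)} (hsize : ∀ x ∈ X, ∀ p ∈ P x, #p < κ)
    (habsorb : ∀ x ∈ X, ∀ b ⊆ x, #b < ρ₃ → ∃ p ∈ P x, b ⊆ p) :
    IsCovFamily ρ₁ κ ρ₃ ρ₄ (⋃ x ∈ X, P x) := by
  refine ⟨fun p hp => ?_, fun b hb => ?_⟩
  · obtain ⟨x, hx, hpx⟩ := mem_iUnion₂.1 hp
    exact hsize x hx p hpx
  · obtain ⟨Q, hQX, hQ, hbQ⟩ := hX.2 b hb
    have hpiece (x) (hx : x ∈ Q) : ∃ p ∈ P x, b ∩ x ⊆ p :=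
      habsorb x (hQX hx) _ inter_subset_right
        ((mk_le_mk_of_subset inter_subset_left).trans_lt hb)
    choose! g hgP hg using hpiece
    refine ⟨g '' Q, ?_, mk_image_le.trans_lt hQ, fun y hy => ?_⟩
    · rintro _ ⟨x, hx, rfl⟩
      exact mem_biUnion (hQX hx) (hgP x hx)
    · obtain ⟨x, hx, hyx⟩ := hbQ hy
      exact ⟨g x, mem_image_of_mem g hx, hg x hx ⟨hy, hyx⟩⟩

theorem IsCovFamily.exists_of_succ (hX : IsCovFamily ρ₁ (Order.succ κ) ρ₃ ρ₄ X)
    (h₃ : ρ₃ ≤ κ.ord.cof) : ∃ Y, IsCovFamily ρ₁ κ ρ₃ ρ₄ Y ∧ #Y ≤ #X * κ := by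
  have hpieces (x) (hx : x ∈ X) :=
    exists_absorbing_family_of_mk_le (Order.lt_succ_iff.1 (hX.1 x hx))
  choose! P hPcard hPsize hPabsorb using hpieces
  refine ⟨⋃ x ∈ X, P x,
    hX.biUnion hPsize fun x hx b hbx hb => hPabsorb x hx b hbx (hb.trans_le h₃), ?_⟩
  calc #(⋃ x ∈ X, P x) ≤ #X * ⨆ x : X, #(P x) := mk_biUnion_le P X
    _ ≤ #X * κ := by gcongr; exact ciSup_le' fun x => hPcard x x.2

theorem cov_anti_size (hex : ∃ X, IsCovFamily ρ₁ ρ₂ ρ₃ ρ₄ X) (h : ρ₂ ≤ κ) :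
    cov ρ₁ κ ρ₃ ρ₄ ≤ cov ρ₁ ρ₂ ρ₃ ρ₄ := by
  obtain ⟨X, hX, hXcard⟩ := exists_isCovFamily_mk_eq_cov hex
  exact (cov_le_mk (hX.mono_size h)).trans_eq hXcard

theorem le_cov_of_isRegular (hex : ∃ X, IsCovFamily ρ₁ ρ₂ ρ₃ ρ₄ X) (hreg : ρ₂.IsRegular)
    (h₁ : ρ₂ ≤ ρ₁) (h₃ : 2 ≤ ρ₃) : ρ₂ ≤ cov ρ₁ ρ₂ ρ₃ ρ₄ := by
  obtain ⟨X, hX, hXcard⟩ := exists_isCovFamily_mk_eq_cov hex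
  exact (hX.le_mk hreg h₁ h₃).trans_eq hXcard

theorem cov_le_cov_succ_mul (hex : ∃ X, IsCovFamily ρ₁ (Order.succ κ) ρ₃ ρ₄ X)
    (h₃ : ρ₃ ≤ κ.ord.cof) : cov ρ₁ κ ρ₃ ρ₄ ≤ cov ρ₁ (Order.succ κ) ρ₃ ρ₄ * κ := by
  obtain ⟨X, hX, hXcard⟩ := exists_isCovFamily_mk_eq_cov hex
  obtain ⟨Y, hY, hYcard⟩ := hX.exists_of_succ h₃
  exact (cov_le_mk hY).trans (hXcard ▸ hYcard)

end CoveringNumber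

theorem stmt13_general {χ lam τ σ : Cardinal.{u}} (hreg : χ.IsRegular) (hlam : χ ≤ lam)
    (hτ : 2 ≤ τ) (hτχ : τ ≤ χ) (hσ : 2 ≤ σ) :
    cov lam χ τ σ = max χ (cov lam (Order.succ χ) τ σ) := by
  have hχ : ∃ X, IsCovFamily lam χ τ σ X := exists_isCovFamily hτχ hσ
  have hsucc : ∃ X, IsCovFamily lam (Order.succ χ) τ σ X :=
    exists_isCovFamily (hτχ.trans (Order.le_succ χ)) hσ
  apply le_antisymm
  · calc cov lam χ τ σ ≤ cov lam (Order.succ χ) τ σ * χ :=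
          cov_le_cov_succ_mul hsucc (hτχ.trans_eq hreg.cof_ord.symm)
      _ ≤ max (cov lam (Order.succ χ) τ σ) χ := mul_le_max_of_aleph0_le_right hreg.aleph0_le
      _ = max χ (cov lam (Order.succ χ) τ σ) := max_comm _ _
  · exact max_le (le_cov_of_isRegular hχ hreg hlam hτ) (cov_anti_size hχ (Order.le_succ χ))

/-- Let `χ` be an uncountable regular cardinal. Then for any cardinal
`λ ≥ χ` and any cardinal `σ` with `2 ≤ σ < χ`,
`cov (λ, χ, χ, σ) = max χ (cov (λ, χ⁺, χ, σ))`. -/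
theorem stmt13 (χ : Cardinal.{u}) (hunc : ℵ₀ < χ) (hreg : χ.IsRegular) :
    ∀ lam : Cardinal.{u}, χ ≤ lam → ∀ σ : Cardinal.{u}, 2 ≤ σ → σ < χ →
      cov lam χ χ σ = max χ (cov lam (Order.succ χ) χ σ) :=
  fun _ hlam _ hσ _ =>
    stmt13_general hreg hlam (ofNat_lt_aleph0.le.trans hreg.aleph0_le) le_rfl hσ
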